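/- (Path Lemma) Let Δ be a 2-connected finite simple graph, and let A and B be two vertex-disjoint paths in Δ. If P₀ and P are two AB-paths (paths with one endpoint in A, the other in B, and internally disjoint from A ∪ B), then there exists a finite sequence of AB-paths P₀, P₁, ..., P_k = P such that for each i, the subgraph P_{i-1} ∪ P_i ∪ A ∪ B contains exactly one cycle. -/

import Mathlib

/-!
Let `Q` be the target AB-path and `P` the current one, `P ≠ Q`. Follow `Q` from the first edge
`xz` at which it leaves `P` (or from its very first edge, if the two paths start at different
vertices of `A`) up to the first vertex `y` after `x` lying on `P` or on `B`. Let `P'` run along `Q`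
up to `y`; if `y` lies on `P`, continue along `P` to `B`, and otherwise stop, since `y` is then
the end of `Q` on `B`. This is again an AB-path (`detour`), and it shares a strictly longer initial
segment with `Q`, so iterating reaches `Q` (`chain_common_prefix`, `chain_exists`).

Consecutive paths give exactly one cycle (`unicyclic_step`): `A ∪ B ∪ P` is a tree, and
`P ∪ P' ∪ A ∪ B` is this tree together with the segment of `Q` from `x` to `y`, which meets the
tree only in its two distinct ends. Concretely, the tree with the segment minus its first edge `xz`
is acyclic (`acyclic_attach`) and connects `x` to `z`, and adding to an acyclic graph a
new edge between two connected vertices creates exactly one cycle (`unicyclic_insert`).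
-/

/-- Two-connectedness: connected, at least 3 vertices, and removing any single vertex
leaves a connected graph. -/
def TwoConnectedSG {V : Type} (G : SimpleGraph V) : Prop :=
  G.Connected ∧ 3 ≤ Nat.card V ∧
    ∀ v : V, ((⊤ : G.Subgraph).deleteVerts {v}).coe.Connected

/-- The set of edges of a walk. -/
def walkEdgeSet {V : Type} {G : SimpleGraph V} {u v : V} (p : G.Walk u v) : Set (Sym2 V) :=
  {e | e ∈ p.edges}

/-- A graph contains exactly one cycle (i.e. exactly one cycle edge-set). -/
def HasExactlyOneCycle {V : Type} (H : SimpleGraph V) : Prop :=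
  ∃! E : Set (Sym2 V),
    ∃ (v : V) (c : H.Walk v v), c.IsCycle ∧ E = {e | e ∈ c.edges}

/-- An AB-path: a path with one endpoint on A, the other on B, internally disjoint from
A ∪ B. -/
def IsABPath {V : Type} (G : SimpleGraph V) {a₁ a₂ b₁ b₂ : V}
    (A : G.Walk a₁ a₂) (B : G.Walk b₁ b₂) {u v : V} (P : G.Walk u v) : Prop :=
  P.IsPath ∧ u ∈ A.support ∧ v ∈ B.support ∧
    ∀ w ∈ P.support, w ≠ u → w ≠ v → w ∉ A.support ∧ w ∉ B.support

/-! ### Unicyclic graphs -/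

section

open SimpleGraph

/-- Removing an edge `xz` from a cycle through it leaves a path from `z` to `x`. -/
theorem cycle_split {V : Type} {H : SimpleGraph V} {v x z : V} (c : H.Walk v v) (hc : c.IsCycle)
    (he : s(x, z) ∈ c.edges) :
    ∃ q : H.Walk z x, q.IsPath ∧ s(x, z) ∉ q.edges ∧ ∀ f, f ∈ c.edges ↔ f = s(x, z) ∨ f ∈ q.edges := by
  classical
  have hx : x ∈ c.support := c.fst_mem_support_of_mem_edges he
  have hmem : ∀ f, f ∈ (c.rotate x hx).edges ↔ f ∈ c.edges := fun f =>
    (c.rotate_edges x hx).perm.mem_iff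
  have hc' := hc.rotate hx
  simp only [← hmem] at he ⊢
  generalize c.rotate x hx = d at *
  cases d with
  | nil => simp at he
  | @cons _ w _ h p =>
    rw [Walk.cons_isCycle_iff] at hc'
    obtain ⟨hp, hnp⟩ := hc'
    by_cases hw : w = z
    · subst hw
      exact ⟨p, hp, hnp, by simp⟩
    · have hz : s(x, z) ∈ p.reverse.edges := by
        have : s(x, z) ≠ s(x, w) := fun h => hw (Sym2.congr_right.1 h).symm
        simpa [this] using he
      have hp' := hp.reverse
      have hpe : ∀ f, f ∈ p.edges ↔ f ∈ p.reverse.edges := by simp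
      simp only [Walk.edges_cons, List.mem_cons, hpe] at hnp ⊢
      generalize p.reverse = r at *
      cases r with
      | nil => simp at hz
      | @cons _ y _ h' r =>
        rw [Walk.cons_isPath_iff] at hp'
        have hy : y = z := by
          simp only [Walk.edges_cons, List.mem_cons] at hz
          rcases hz with hz | hz
          · exact (Sym2.congr_right.1 hz).symm
          · exact absurd (r.fst_mem_support_of_mem_edges hz) hp'.2
        subst hy
        refine ⟨r.concat h.symm, hp'.1.concat hp'.2 h.symm, ?_, ?_⟩
        · simp only [Walk.edges_concat, List.concat_eq_append, List.mem_append, List.mem_singleton]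
          rintro (h1 | h1)
          · exact hp'.2 (r.fst_mem_support_of_mem_edges h1)
          · rw [Sym2.eq_swap (a := w)] at h1
            exact hw (Sym2.congr_right.1 h1).symm
        · intro f
          simp [Sym2.eq_swap (a := w)]
          tauto

/-- A new edge joining two connected vertices of an acyclic graph creates exactly one cycle: every
cycle uses the new edge, and the rest of it is the unique path between its ends. -/
theorem unicyclic_insert {V : Type} (E : Set (Sym2 V)) {x z : V} (hxz : x ≠ z)
    (hE : s(x, z) ∉ E) (hac : (fromEdgeSet E).IsAcyclic)
    (hr : (fromEdgeSet E).Reachable z x) :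
    HasExactlyOneCycle (fromEdgeSet (insert s(x, z) E)) := by
  classical
  have hle : fromEdgeSet E ≤ fromEdgeSet (insert s(x, z) E) :=
    fromEdgeSet_mono (Set.subset_insert _ _)
  have hedge : ∀ {a b} (q : (fromEdgeSet E).Walk a b), s(x, z) ∉ q.edges := fun q hq => by
    have := q.edges_subset_edgeSet hq
    simp [hE] at this
  obtain ⟨q₀, hq₀⟩ := hr.exists_isPath
  have hadj : (fromEdgeSet (insert s(x, z) E)).Adj x z := by simp [hxz]
  refine ⟨{f | f = s(x, z) ∨ f ∈ q₀.edges}, ⟨x, Walk.cons hadj (q₀.mapLe hle), ?_, ?_⟩, ?_⟩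
  · rw [Walk.cons_isCycle_iff]
    exact ⟨hq₀.mapLe hle, by simpa using hedge q₀⟩
  · simp
  · rintro _ ⟨v, c, hc, rfl⟩
    have hce : s(x, z) ∈ c.edges := by
      by_contra hn
      have ht : ∀ f ∈ c.edges, f ∈ (fromEdgeSet E).edgeSet := by
        intro f hf
        have := c.edges_subset_edgeSet hf
        have hne : f ≠ s(x, z) := fun h => hn (h ▸ hf)
        simpa [hne] using this
      exact hac _ (hc.transfer ht)
    obtain ⟨q, hq, hqe, hqc⟩ := cycle_split c hc hce
    have ht : ∀ f ∈ q.edges, f ∈ (fromEdgeSet E).edgeSet := by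
      intro f hf
      have := q.edges_subset_edgeSet hf
      have hne : f ≠ s(x, z) := fun h => hqe (h ▸ hf)
      simpa [hne] using this
    have := (hac.subsingleton_path z x).elim ⟨_, hq.transfer ht⟩ ⟨_, hq₀⟩
    have h2 : q.edges = q₀.edges := by
      rw [← Subtype.mk.inj this, Walk.edges_transfer]
    ext f
    simp [hqc, h2]

/-! ### Acyclic unions of paths -/

/-- Acyclicity survives attaching a path that meets the old edges at most in its last vertex: its
vertices, added from the last one backwards, are successive leaves. -/
theorem acyclic_attach {V : Type} {G : SimpleGraph V} (E : Set (Sym2 V))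
    (hE : (fromEdgeSet E).IsAcyclic) {x y : V} (p : G.Walk x y) (hp : p.IsPath)
    (hd : ∀ t ∈ p.support, t ≠ y → ∀ e ∈ E, t ∉ e) :
    (fromEdgeSet (E ∪ walkEdgeSet p)).IsAcyclic := by
  induction p with
  | nil => simpa [walkEdgeSet] using hE
  | @cons x z y h p ih =>
    rw [Walk.cons_isPath_iff] at hp
    have ih := ih hp.1 fun t ht => hd t (by simp [ht])
    have heq : fromEdgeSet (E ∪ walkEdgeSet (Walk.cons h p)) =
        fromEdgeSet (E ∪ walkEdgeSet p) ⊔ edge x z := by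
      rw [edge, ← fromEdgeSet_union]
      congr 1
      ext e
      simp [walkEdgeSet]
      tauto
    rw [heq]
    refine ih.sup_edge_of_not_reachable ?_
    rintro ⟨w⟩
    -- `x` is isolated in the graph without the edge `xz`.
    cases w with
    | nil => exact G.irrefl h
    | cons h' _ =>
      rw [fromEdgeSet_adj] at h'
      rcases h'.1 with h' | h'
      · refine hd x (by simp) ?_ _ h' (by simp)
        rintro rfl
        exact hp.2 p.end_mem_support
      · exact hp.2 (p.fst_mem_support_of_mem_edges h')

/-! ### Concatenating and cutting walks -/

theorem isPath_append_iff {V : Type} {G : SimpleGraph V} {x y z : V} (p : G.Walk x y)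
    (q : G.Walk y z) :
    (p.append q).IsPath ↔ p.IsPath ∧ q.IsPath ∧ ∀ t ∈ p.support, t ∈ q.support → t = y := by
  induction p with
  | nil => simp
  | cons h p ih =>
    simp only [Walk.cons_append, Walk.cons_isPath_iff, ih, Walk.mem_support_append_iff,
      Walk.support_cons, List.mem_cons]
    constructor
    · rintro ⟨⟨h1, h2, h3⟩, h4⟩
      refine ⟨⟨h1, by tauto⟩, h2, ?_⟩
      rintro t (rfl | ht) ht'
      · tauto
      · exact h3 t ht ht'
    · rintro ⟨⟨h1, h2⟩, h3, h4⟩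
      refine ⟨⟨h1, h3, fun t ht => h4 t (Or.inr ht)⟩, ?_⟩
      rintro (h | h)
      · exact h2 h
      · exact h2 (h4 _ (Or.inl rfl) h ▸ p.end_mem_support)

/-- Cuts a walk ending in `X` at its first vertex in `X`. -/
theorem exists_first_mem {V : Type} {G : SimpleGraph V} (X : Set V) {z v : V} (S : G.Walk z v)
    (hv : v ∈ X) :
    ∃ (y : V) (S₁ : G.Walk z y) (S₂ : G.Walk y v), S = S₁.append S₂ ∧ y ∈ X ∧
      ∀ t ∈ S₁.support, t ∈ X → t = y := by
  induction S with
  | nil => exact ⟨_, .nil, .nil, rfl, hv, by simp⟩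
  | @cons z w v h S ih =>
    by_cases hz : z ∈ X
    · exact ⟨z, .nil, .cons h S, rfl, hz, by simp⟩
    · obtain ⟨y, S₁, S₂, rfl, hy, hS⟩ := ih hv
      refine ⟨y, .cons h S₁, S₂, rfl, hy, ?_⟩
      simp only [Walk.support_cons, List.mem_cons]
      rintro t (rfl | ht) ht'
      · exact absurd ht' hz
      · exact hS t ht ht'

/-! ### The tree formed by `A`, `B` and an AB-path -/

theorem acyclic_tree {V : Type} {G : SimpleGraph V} {a₁ a₂ b₁ b₂ u v : V}
    {A : G.Walk a₁ a₂} {B : G.Walk b₁ b₂} (hA : A.IsPath) (hB : B.IsPath)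
    (hdisj : ∀ w : V, w ∈ A.support → w ∉ B.support) {P : G.Walk u v} (hP : IsABPath G A B P) :
    (fromEdgeSet (walkEdgeSet P ∪ walkEdgeSet A ∪ walkEdgeSet B)).IsAcyclic := by
  obtain ⟨hp, hu, hv, hint⟩ := hP
  have mem : ∀ {a b : V} (p : G.Walk a b) {e t}, e ∈ walkEdgeSet p → t ∈ e → t ∈ p.support := by
    intro a b p e t he ht
    exact p.mem_support_of_mem_edges he ht
  -- Build the graph from `A` by attaching `P`, then the two parts of `B` on either side of `v`.
  have h1 := acyclic_attach ∅ (by simp) A hA (by simp)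
  have h2 := acyclic_attach _ h1 P.reverse hp.reverse (by
    intro t ht htu e he hte
    simp only [Set.empty_union] at he
    have hta := mem A he hte
    by_cases htv : t = v
    · exact hdisj _ hta (htv ▸ hv)
    · exact (hint t (by simpa using ht) htu htv).1 hta)
  obtain ⟨B₁, B₂, rfl⟩ := (Walk.mem_support_iff_exists_append).1 hv
  rw [isPath_append_iff] at hB
  have hPB : ∀ t ∈ P.support, t ≠ v → t ∉ (B₁.append B₂).support := by
    intro t ht htv htB
    by_cases htu : t = u
    · exact hdisj t (htu ▸ hu) htB
    · exact (hint t ht htu htv).2 htB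
  have h3 := acyclic_attach _ h2 B₁ hB.1 (by
    intro t ht htv e he hte
    have htB : t ∈ (B₁.append B₂).support := by simp [Walk.mem_support_append_iff, ht]
    simp only [Set.empty_union] at he
    rcases he with he | he
    · exact hdisj t (mem A he hte) htB
    · exact hPB t (by simpa using mem _ he hte) htv htB)
  have h4 := acyclic_attach _ h3 B₂.reverse hB.2.1.reverse (by
    intro t ht htv e he hte
    have ht : t ∈ B₂.support := by simpa using ht
    have htB : t ∈ (B₁.append B₂).support := by simp [Walk.mem_support_append_iff, ht]
    simp only [Set.empty_union] at he
    rcases he with (he | he) | he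
    · exact hdisj t (mem A he hte) htB
    · exact hPB t (by simpa using mem _ he hte) htv htB
    · exact htv (hB.2.2 t (mem _ he hte) ht))
  convert h4 using 2
  ext e
  simp [walkEdgeSet]
  tauto

theorem reachable_of_mem_support {V : Type} {G : SimpleGraph V} {a b : V} (p : G.Walk a b) (E : Set (Sym2 V))
    (hE : walkEdgeSet p ⊆ E) {s t : V} (hs : s ∈ p.support) (ht : t ∈ p.support) :
    (fromEdgeSet E).Reachable s t := by
  classical
  have key : ∀ t ∈ p.support, (fromEdgeSet E).Reachable a t := by
    intro t ht
    refine ⟨(p.takeUntil t ht).transfer _ fun e he => ?_⟩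
    have he := p.edges_takeUntil_subset_edges ht he
    simpa using ⟨hE he, G.not_isDiag_of_mem_edgeSet (p.edges_subset_edgeSet he)⟩
  exact (key s hs).symm.trans (key t ht)

/-- `A ∪ B ∪ P` together with a path `x, z, …, y` meeting it only in the ends `x ≠ y` has exactly one
cycle. The set `E'` is meant to be the edge set of the rerouted path: all of the new path and
possibly some edges of `P`. The hypothesis on `xz` matters when `z = y`. -/
theorem unicyclic_step {V : Type} {G : SimpleGraph V} {a₁ a₂ b₁ b₂ u w x y z : V}
    {A : G.Walk a₁ a₂} {B : G.Walk b₁ b₂} (hA : A.IsPath) (hB : B.IsPath)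
    (hdisj : ∀ w : V, w ∈ A.support → w ∉ B.support) {P : G.Walk u w} (hP : IsABPath G A B P)
    (h : G.Adj x z) (S : G.Walk z y) (hS : S.IsPath) (hxS : x ∉ S.support)
    (hx : x ∈ A.support ∨ x ∈ P.support) (hxB : x ∉ B.support)
    (hy : y ∈ P.support ∨ y ∈ B.support) (hSA : ∀ t ∈ S.support, t ∉ A.support)
    (hSPB : ∀ t ∈ S.support, t ∈ P.support ∨ t ∈ B.support → t = y)
    (he : s(x, z) ∉ P.edges) (E' : Set (Sym2 V))
    (h1 : walkEdgeSet (Walk.cons h S) ⊆ E')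
    (h2 : E' ⊆ walkEdgeSet P ∪ walkEdgeSet (Walk.cons h S)) :
    HasExactlyOneCycle
      (fromEdgeSet (walkEdgeSet P ∪ E' ∪ walkEdgeSet A ∪ walkEdgeSet B)) := by
  set T := walkEdgeSet P ∪ walkEdgeSet A ∪ walkEdgeSet B with hT
  have heq : walkEdgeSet P ∪ E' ∪ walkEdgeSet A ∪ walkEdgeSet B =
      insert s(x, z) (T ∪ walkEdgeSet S) := by
    ext e
    have h1 := @h1 e
    have h2 := @h2 e
    simp only [hT, walkEdgeSet, Walk.edges_cons, Set.mem_union, Set.mem_insert_iff,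
      Set.mem_ofPred_eq, List.mem_cons] at h1 h2 ⊢
    grind
  rw [heq]
  apply unicyclic_insert _ h.ne
  · rintro (((h' | h') | h') | h')
    · exact he h'
    · exact hSA z S.start_mem_support (A.snd_mem_support_of_mem_edges h')
    · exact hxB (B.fst_mem_support_of_mem_edges h')
    · exact hxS (S.fst_mem_support_of_mem_edges h')
  · refine acyclic_attach T (acyclic_tree hA hB hdisj hP) S hS ?_
    rintro t ht hty e ((he | he) | he) hte
    · exact hty (hSPB t ht (.inl (P.mem_support_of_mem_edges he hte)))
    · exact hSA t ht (A.mem_support_of_mem_edges he hte)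
    · exact hty (hSPB t ht (.inr (B.mem_support_of_mem_edges he hte)))
  · have hreach : ∀ {a b : V} (p : G.Walk a b), walkEdgeSet p ⊆ T ∪ walkEdgeSet S →
        ∀ {s t}, s ∈ p.support → t ∈ p.support →
          (fromEdgeSet (T ∪ walkEdgeSet S)).Reachable s t := fun p hp => reachable_of_mem_support p _ hp
    have hEP : walkEdgeSet P ⊆ T ∪ walkEdgeSet S := by intro e he; simp [hT, he]
    have hEA : walkEdgeSet A ⊆ T ∪ walkEdgeSet S := by intro e he; simp [hT, he]
    have hEB : walkEdgeSet B ⊆ T ∪ walkEdgeSet S := by intro e he; simp [hT, he]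
    have hES : walkEdgeSet S ⊆ T ∪ walkEdgeSet S := by intro e he; simp [he]
    have r1 := hreach S hES S.start_mem_support S.end_mem_support
    have r2 : (fromEdgeSet (T ∪ walkEdgeSet S)).Reachable y w := by
      rcases hy with hy | hy
      · exact hreach P hEP hy P.end_mem_support
      · exact hreach B hEB hy hP.2.2.1
    have r3 : (fromEdgeSet (T ∪ walkEdgeSet S)).Reachable w x := by
      rcases hx with hx | hx
      · exact (hreach P hEP P.end_mem_support P.start_mem_support).trans
          (hreach A hEA hP.2.1 hx)
      · exact hreach P hEP P.end_mem_support hx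
    exact (r1.trans r2).trans r3

/-! ### Rerouting an AB-path -/

/-- An AB-path bundled with its endpoints. -/
structure ABPath {V : Type} (G : SimpleGraph V) {a₁ a₂ b₁ b₂ : V} (A : G.Walk a₁ a₂)
    (B : G.Walk b₁ b₂) where
  fst : V
  lst : V
  walk : G.Walk fst lst
  isAB : IsABPath G A B walk

/-- Two AB-paths form exactly one cycle together with `A` and `B`. -/
def ABPath.Step {V : Type} {G : SimpleGraph V} {a₁ a₂ b₁ b₂ : V} {A : G.Walk a₁ a₂}
    {B : G.Walk b₁ b₂} (p q : ABPath G A B) : Prop :=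
  HasExactlyOneCycle (fromEdgeSet
    (walkEdgeSet p.walk ∪ walkEdgeSet q.walk ∪ walkEdgeSet A ∪ walkEdgeSet B))

/-- One rerouting step from `P` towards `Q`, the concatenation of `R`, the edge `xz`, `S₁` and `S₂`.
Here `R` is the initial segment already shared (or trivial), and `y` is the first vertex of `Q` after
`x` on `P` or `B`. The new path follows `Q` up to `y`, then the part `D` of `P` after `y`, or nothing
if `y` is already on `B`. -/
theorem detour {V : Type} {G : SimpleGraph V} {a₁ a₂ b₁ b₂ u₀ w u v x y z : V}
    {A : G.Walk a₁ a₂} {B : G.Walk b₁ b₂} (hA : A.IsPath) (hB : B.IsPath)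
    (hdisj : ∀ w : V, w ∈ A.support → w ∉ B.support) {P : G.Walk u₀ w} (hP : IsABPath G A B P)
    (R : G.Walk u x) (h : G.Adj x z) (S₁ : G.Walk z y) (S₂ : G.Walk y v)
    (hQ : IsABPath G A B ((R.append (.cons h S₁)).append S₂))
    (hx : x ∈ A.support ∨ x ∈ P.support) (hR : R.edges ⊆ P.edges)
    (hy : y ∈ P.support ∨ y ∈ B.support)
    (hS : ∀ t ∈ S₁.support, t ∈ P.support ∨ t ∈ B.support → t = y)
    (hD : y ∈ P.support → ∃ (C : G.Walk u₀ y) (D : G.Walk y w), P = C.append D ∧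
      ∀ t ∈ R.support, t ∉ D.support)
    (he : s(x, z) ∉ P.edges) :
    ∃ (w' : V) (D' : G.Walk y w')
      (h' : IsABPath G A B ((R.append (.cons h S₁)).append D')),
      ABPath.Step ⟨_, _, P, hP⟩ ⟨_, _, _, h'⟩ := by
  obtain ⟨hQp, huA, hvB, hQint⟩ := hQ
  obtain ⟨hPp, hu₀A, hwB, hPint⟩ := id hP
  obtain ⟨hR₁, hS₂, hQd⟩ := (isPath_append_iff _ _).1 hQp
  obtain ⟨hRp, hhS₁, hRd⟩ := (isPath_append_iff _ _).1 hR₁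
  obtain ⟨hS₁, hxS₁⟩ := (Walk.cons_isPath_iff _ _).1 hhS₁
  have hRS : ∀ t ∈ R.support, t ∉ S₁.support := by
    intro t htR htS
    have := hRd t htR (by simp [htS])
    exact hxS₁ (this ▸ htS)
  have memQ : ∀ t, t ∈ R.support ∨ t ∈ S₁.support →
      t ∈ ((R.append (.cons h S₁)).append S₂).support := by
    intro t ht
    simp only [Walk.mem_support_append_iff, Walk.support_cons, List.mem_cons]
    grind
  have mem1 : ∀ t, t ∈ (R.append (.cons h S₁)).support ↔ t ∈ R.support ∨ t ∈ S₁.support := by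
    intro t
    simp only [Walk.mem_support_append_iff, Walk.support_cons, List.mem_cons]
    constructor
    · rintro (h | rfl | h)
      · exact .inl h
      · exact .inl R.end_mem_support
      · exact .inr h
    · tauto
  have hvR : v ∉ R.support := by
    intro hv
    have h1 := hQd v ((mem1 v).2 (.inl hv)) S₂.end_mem_support
    exact hRS v hv (h1 ▸ S₁.end_mem_support)
  have hSA : ∀ t ∈ S₁.support, t ∉ A.support := by
    intro t ht htA
    refine (hQint t (memQ t (.inr ht)) ?_ ?_).1 htA
    · rintro rfl
      exact hRS _ R.start_mem_support ht
    · rintro rfl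
      exact hdisj _ htA hvB
  have hRB : ∀ t ∈ R.support, t ∉ B.support := by
    intro t ht htB
    refine (hQint t (memQ t (.inl ht)) ?_ ?_).2 htB
    · rintro rfl
      exact hdisj _ huA htB
    · rintro rfl
      exact hvR ht
  have step := fun {w' : V} (D' : G.Walk y w') (hD' : D'.edges ⊆ P.edges) =>
    unicyclic_step hA hB hdisj hP h S₁ hS₁ hxS₁ hx (hRB x R.end_mem_support) hy hSA hS he
      (walkEdgeSet ((R.append (.cons h S₁)).append D'))
      (by intro e he
          simp only [walkEdgeSet, Walk.edges_cons, Walk.edges_append, Set.mem_ofPred_eq,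
            List.mem_append, List.mem_cons] at he ⊢
          exact .inl (.inr he))
      (by intro e he
          have h1 := @hD' e
          have h2 := @hR e
          simp only [walkEdgeSet, Walk.edges_cons, Walk.edges_append, Set.mem_ofPred_eq,
            Set.mem_union, List.mem_append, List.mem_cons] at he ⊢
          grind)
  by_cases hyP : y ∈ P.support
  · obtain ⟨C, D, rfl, hRD⟩ := hD hyP
    have hDp := ((isPath_append_iff _ _).1 hPp).2.1
    have hDP : ∀ t ∈ D.support, t ∈ (C.append D).support := by
      intro t ht
      simp [Walk.mem_support_append_iff, ht]
    refine ⟨w, D, ⟨?_, huA, hwB, ?_⟩, step D (by intro e he; simp [he])⟩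
    · refine (isPath_append_iff _ _).2 ⟨hR₁, hDp, ?_⟩
      intro t ht htD
      rcases (mem1 t).1 ht with ht | ht
      · exact absurd htD (hRD t ht)
      · exact hS t ht (.inl (hDP t htD))
    · intro t ht htu htw
      have hmem := (Walk.mem_support_append_iff _ _).1 ht
      rw [mem1] at hmem
      have hD : t ∈ D.support → t ∉ A.support ∧ t ∉ B.support := by
        intro ht
        refine hPint t (hDP t ht) ?_ htw
        rintro rfl
        -- the start of `P` could only lie on `D` if it were `y`, which is not on `A`
        have := ((isPath_append_iff _ _).1 hPp).2.2 _ C.start_mem_support ht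
        exact hSA y S₁.end_mem_support (this ▸ hu₀A)
      rcases hmem with (ht | ht) | ht
      · exact hQint t (memQ t (.inl ht)) htu (by rintro rfl; exact hvR ht)
      · refine ⟨hSA t ht, fun htB => ?_⟩
        have hty := hS t ht (.inr htB)
        subst hty
        exact (hD D.start_mem_support).2 htB
      · exact hD ht
  · have hyB : y ∈ B.support := hy.resolve_left hyP
    refine ⟨y, .nil, ⟨by simpa using hR₁, huA, hyB, ?_⟩, step .nil (by simp)⟩
    intro t ht htu hty
    rw [Walk.append_nil, mem1] at ht
    rcases ht with ht | ht
    · exact hQint t (memQ t (.inl ht)) htu (by rintro rfl; exact hvR ht)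
    · exact ⟨hSA t ht, fun htB => hty (hS t ht (.inr htB))⟩

/-- Two AB-paths with a common initial segment `R` are linked by a chain; the induction is on the
length of the rest `S` of the target path. -/
theorem chain_common_prefix {V : Type} {G : SimpleGraph V} {a₁ a₂ b₁ b₂ u : V}
    {A : G.Walk a₁ a₂} {B : G.Walk b₁ b₂} (hA : A.IsPath) (hB : B.IsPath)
    (hdisj : ∀ w : V, w ∈ A.support → w ∉ B.support) (n : ℕ) :
    ∀ {x v w : V} (R : G.Walk u x) (S : G.Walk x v) (P' : G.Walk x w), S.length ≤ n →
      ∀ (Q : G.Walk u v) (hQ : IsABPath G A B Q) (P : G.Walk u w) (hP : IsABPath G A B P),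
        Q = R.append S → P = R.append P' →
        Relation.ReflTransGen ABPath.Step
          (⟨_, _, P, hP⟩ : ABPath G A B) ⟨_, _, Q, hQ⟩ := by
  -- If nothing is left of `Q`, then `x` lies on `B`, so `P` ends there too.
  have base : ∀ {x w : V} (R : G.Walk u x) (P' : G.Walk x w) (Q : G.Walk u x)
      (hQ : IsABPath G A B Q) (P : G.Walk u w) (hP : IsABPath G A B P),
      Q = R.append .nil → P = R.append P' →
        Relation.ReflTransGen ABPath.Step
          (⟨_, _, P, hP⟩ : ABPath G A B) ⟨_, _, Q, hQ⟩ := by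
    intro x w R P' Q hQ P hP hQR hPR
    subst hPR
    have hxB := hQ.2.2.1
    have hxw : x = w := by
      by_contra hxw
      refine (hP.2.2.2 x (by simp [Walk.mem_support_append_iff]) ?_ hxw).2 hxB
      rintro rfl
      exact hdisj _ hP.2.1 hxB
    subst hxw
    have : P' = .nil := (Walk.isPath_iff_nil.1 ((isPath_append_iff _ _).1 hP.1).2.1).eq_nil
    subst this hQR
    exact .refl
  induction n with
  | zero =>
    intro x v w R S P' hn Q hQ P hP hQR hPR
    cases S with
    | cons => simp at hn
    | nil => exact base R P' Q hQ P hP hQR hPR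
  | succ n ih =>
    intro x v w R S P' hn Q hQ P hP hQR hPR
    cases S with
    | nil => exact base R P' Q hQ P hP hQR hPR
    | @cons _ z _ h S =>
    simp only [Walk.length_cons, Nat.add_le_add_iff_right] at hn
    subst hPR
    have hRP' := (isPath_append_iff _ _).1 hP.1
    have hRS := (isPath_append_iff _ _).1 (hQR ▸ hQ.1)
    have hxS := (Walk.cons_isPath_iff _ _).1 hRS.2.1
    have hRS' : ∀ t ∈ S.support, t ∉ R.support := by
      intro t ht htR
      have := hRS.2.2 t htR (by simp [ht])
      exact hxS.2 (this ▸ ht)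
    by_cases hz : s(x, z) ∈ P'.edges
    · -- both paths continue with the same edge, which joins the common prefix
      cases P' with
      | nil => simp at hz
      | @cons _ z' _ h' P' =>
        have hxP' := ((Walk.cons_isPath_iff _ _).1 hRP'.2.1).2
        have hzz : z = z' := by
          rw [Walk.edges_cons, List.mem_cons] at hz
          rcases hz with hz | hz
          · exact Sym2.congr_right.1 hz
          · exact absurd (P'.fst_mem_support_of_mem_edges hz) hxP'
        subst hzz
        refine ih (R.append (.cons h .nil)) S P' hn Q hQ _ hP ?_ ?_
        · simp [hQR, ← Walk.append_assoc]
        · simp [← Walk.append_assoc]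
    · obtain ⟨y, S₁, S₂, rfl, hy, hS₁⟩ := exists_first_mem
        {t | t ∈ (R.append P').support ∨ t ∈ B.support} S (Or.inr hQ.2.2.1)
      have hyR : y ∉ R.support := hRS' y (by simp [Walk.mem_support_append_iff])
      have hQ' : Q = (R.append (.cons h S₁)).append S₂ := by
        simp [hQR, ← Walk.append_assoc]
      subst hQ'
      obtain ⟨w', D', h', hstep⟩ := detour hA hB hdisj hP R h S₁ S₂ hQ
        (Or.inr (by simp [Walk.mem_support_append_iff])) (by intro e he; simp [he]) hy hS₁
        (by
          intro hyP
          have hyP' : y ∈ P'.support := by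
            rw [Walk.mem_support_append_iff] at hyP
            exact hyP.resolve_left hyR
          obtain ⟨C, D, rfl⟩ := (Walk.mem_support_iff_exists_append).1 hyP'
          refine ⟨R.append C, D, Walk.append_assoc .., ?_⟩
          intro t htR htD
          have hCD := ((isPath_append_iff _ _).1 hRP'.2.1).2.2
          have htx := hRP'.2.2 t htR (by simp [Walk.mem_support_append_iff, htD])
          subst htx
          exact hyR (hCD _ C.start_mem_support htD ▸ htR))
        (by
          rw [Walk.edges_append, List.mem_append]
          rintro (he | he)
          · exact hRS' z (S₁.append S₂).start_mem_support (R.snd_mem_support_of_mem_edges he)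
          · exact hz he)
      refine .head hstep (ih (R.append (.cons h S₁)) S₂ D' ?_ _ hQ _ h' rfl rfl)
      simp only [Walk.length_append] at hn
      omega

/-- If the two paths start at different vertices of `A`, a first step makes the starts agree. -/
theorem chain_exists {V : Type} {G : SimpleGraph V} {a₁ a₂ b₁ b₂ : V}
    {A : G.Walk a₁ a₂} {B : G.Walk b₁ b₂} (hA : A.IsPath) (hB : B.IsPath)
    (hdisj : ∀ w : V, w ∈ A.support → w ∉ B.support) {u₀ v₀ u v : V} (P : G.Walk u₀ v₀)
    (Q : G.Walk u v) (hP : IsABPath G A B P) (hQ : IsABPath G A B Q) :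
    Relation.ReflTransGen ABPath.Step (⟨_, _, P, hP⟩ : ABPath G A B) ⟨_, _, Q, hQ⟩ := by
  by_cases hu : u₀ = u
  · subst hu
    exact chain_common_prefix hA hB hdisj _ .nil Q P le_rfl Q hQ P hP rfl rfl
  · have huP : u ∉ P.support := by
      intro hmem
      refine (hP.2.2.2 u hmem (Ne.symm hu) ?_).1 hQ.2.1
      rintro rfl
      exact hdisj _ hQ.2.1 hP.2.2.1
    cases Q with
    | nil => exact absurd hQ.2.2.1 (hdisj _ hQ.2.1)
    | @cons _ z _ h S =>
      obtain ⟨y, S₁, S₂, rfl, hy, hS₁⟩ := exists_first_mem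
        {t | t ∈ P.support ∨ t ∈ B.support} S (Or.inr hQ.2.2.1)
      obtain ⟨w', D', h', hstep⟩ := detour hA hB hdisj hP .nil h S₁ S₂ (by simpa using hQ)
        (Or.inl hQ.2.1) (by simp) hy hS₁
        (by
          intro hyP
          obtain ⟨C, D, rfl⟩ := (Walk.mem_support_iff_exists_append).1 hyP
          refine ⟨C, D, rfl, ?_⟩
          intro t ht htD
          rw [Walk.support_nil, List.mem_singleton] at ht
          subst ht
          exact huP (by simp [Walk.mem_support_append_iff, htD]))
        (fun he => huP (P.fst_mem_support_of_mem_edges he))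
      exact .head hstep
        (chain_common_prefix hA hB hdisj _ .nil _ _ le_rfl _ hQ _ h' rfl rfl)

theorem exists_seq_of_reflTransGen {α : Type*} {r : α → α → Prop} {a b : α}
    (h : Relation.ReflTransGen r a b) :
    ∃ (k : ℕ) (f : ℕ → α), f 0 = a ∧ f k = b ∧ ∀ i, 1 ≤ i → i ≤ k → r (f (i - 1)) (f i) := by
  induction h using Relation.ReflTransGen.head_induction_on with
  | refl => exact ⟨0, fun _ => b, rfl, rfl, by intros; omega⟩
  | @head a c hac _ ih =>
    obtain ⟨k, f, h0, hk, hf⟩ := ih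
    refine ⟨k + 1, fun i => Nat.casesOn i a f, rfl, hk, ?_⟩
    rintro (_ | _ | i) h1 h2
    · omega
    · simpa [h0] using hac
    · exact hf (i + 1) (by omega) (by omega)

end

/-- Path Lemma: In a 2-connected finite simple graph, any two AB-paths
are connected by a chain of AB-paths, consecutive ones forming exactly one cycle with
A ∪ B. -/
theorem path_lemma {V : Type} [Fintype V] (Δ : SimpleGraph V)
    (h2 : TwoConnectedSG Δ)
    {a₁ a₂ b₁ b₂ : V} (A : Δ.Walk a₁ a₂) (B : Δ.Walk b₁ b₂)
    (hA : A.IsPath) (hB : B.IsPath)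
    (hdisj : ∀ w : V, w ∈ A.support → w ∉ B.support)
    {u₀ v₀ u v : V} (P₀ : Δ.Walk u₀ v₀) (P : Δ.Walk u v)
    (hP₀ : IsABPath Δ A B P₀) (hP : IsABPath Δ A B P) :
    ∃ (k : ℕ) (us vs : ℕ → V) (Ps : ∀ i : ℕ, Δ.Walk (us i) (vs i)),
      (∀ i ≤ k, IsABPath Δ A B (Ps i)) ∧
      walkEdgeSet (Ps 0) = walkEdgeSet P₀ ∧
      walkEdgeSet (Ps k) = walkEdgeSet P ∧
      ∀ i : ℕ, 1 ≤ i → i ≤ k →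
        HasExactlyOneCycle
          (SimpleGraph.fromEdgeSet
            (walkEdgeSet (Ps (i - 1)) ∪ walkEdgeSet (Ps i) ∪
              walkEdgeSet A ∪ walkEdgeSet B)) := by
  obtain ⟨k, f, h0, hk, hf⟩ :=
    exists_seq_of_reflTransGen (chain_exists hA hB hdisj P₀ P hP₀ hP)
  refine ⟨k, fun i => (f i).fst, fun i => (f i).lst, fun i => (f i).walk,
    fun i _ => (f i).isAB, ?_, ?_, hf⟩
  · exact congrArg (fun p : ABPath Δ A B => walkEdgeSet p.walk) h0
  · exact congrArg (fun p : ABPath Δ A B => walkEdgeSet p.walk) hk
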